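/- Suppose the nonuniform time mesh satisfies ρ_k ≥ η for all k ≥ 2, where η ≈ 0.475329 is the unique positive root of 1 − 3ρ²(1+ρ) = 0. Then for every k ≥ 2, the entries of the L2-1_σ matrix satisfy ((1−α)/σ)[M]_{k,k} − [M]_{k,k−1} ≥ 0. -/

import Mathlib

open MeasureTheory Real Finset

noncomputable section

/-- Time step `τ_j = t_j - t_{j-1}`. -/
def tau (t : ℕ → ℝ) (j : ℕ) : ℝ := t j - t (j - 1)

/-- Step ratio `ρ_j = τ_j / τ_{j-1}`. -/
def rho (t : ℕ → ℝ) (j : ℕ) : ℝ := tau t j / tau t (j - 1)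

/-- Offset node `t_k^* = t_{k-1} + σ τ_k` with `σ = 1 - α/2`. -/
def tstar (α : ℝ) (t : ℕ → ℝ) (k : ℕ) : ℝ := t (k - 1) + (1 - α / 2) * tau t k

/-- L2-1_σ coefficient `a_j^k`. -/
def acoef (α : ℝ) (t : ℕ → ℝ) (j k : ℕ) : ℝ :=
  ∫ θ in (0:ℝ)..1,
    (-2 * tau t j * (1 - θ) - tau t (j + 1)) /
      ((tau t j + tau t (j + 1)) * (tstar α t k - (t (j - 1) + θ * tau t j)) ^ α)

/-- L2-1_σ coefficient `c_j^k`. -/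
def ccoef (α : ℝ) (t : ℕ → ℝ) (j k : ℕ) : ℝ :=
  ∫ θ in (0:ℝ)..1,
    (tau t j ^ 2 * (2 * θ - 1)) /
      (tau t (j + 1) * (tau t j + tau t (j + 1)) *
        (tstar α t k - (t (j - 1) + θ * tau t j)) ^ α)

/-- `d_j^k = c_{j-1}^k - a_j^k`. -/
def dcoef (α : ℝ) (t : ℕ → ℝ) (j k : ℕ) : ℝ := ccoef α t (j - 1) k - acoef α t j k

/-- The lower-triangular L2-1_σ matrix `M` (entries vanish above the diagonal and
for column index `0`). -/
def Mentry (α : ℝ) (t : ℕ → ℝ) (k j : ℕ) : ℝ :=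
  if j = 0 ∨ k < j then 0
  else if j = k then ccoef α t (k - 1) k + (1 - α / 2) ^ (1 - α) / ((1 - α) * tau t k ^ α)
  else if j = 1 then -acoef α t 1 k
  else dcoef α t j k

end

/-!
The weights in `c_j^k` and `a_j^k` have, up to sign and normalization, the primitives `θ(1 - θ)` and
`θ τ_{j+1} + θ(2 - θ) τ_j`, which are nonnegative on `[0, 1]`. Integration by parts against them
turns bounds on the derivative of the increasing kernel `(t_k^* - t_{j-1} - θ τ_j)^(-α)` into bounds
on the coefficients. The upper bound on the derivative on one interval and the lower bound on the
next are multiples of the same number, attained at the common node. Hence in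
`d_j^k = c_{j-1}^k - a_j^k` the lower bound absorbs the upper one as soon as
`1 ≤ 3 ρ_j² (1 + ρ_j)`, which leaves `[M]_{k,j} ≤ (t_k^* - t_j)^(-α)`. Since `c_{k-1}^k ≥ 0`, the
scaled diagonal entry is at least `(σ τ_k)^(-α) = (t_k^* - t_{k-1})^(-α)`, which is the larger of
the two powers.
-/

section IntegrationByParts

variable {a b m M : ℝ} {u u' v v' : ℝ → ℝ}

theorem integral_mul_deriv_le_of_le_deriv (hab : a ≤ b)
    (hu : ∀ x ∈ Set.Icc a b, HasDerivAt u (u' x) x)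
    (hv : ∀ x ∈ Set.Icc a b, HasDerivAt v (v' x) x)
    (hu' : IntervalIntegrable u' volume a b) (hv' : IntervalIntegrable v' volume a b)
    (hv_nonneg : ∀ x ∈ Set.Icc a b, 0 ≤ v x) (hm : ∀ x ∈ Set.Icc a b, m ≤ u' x) :
    ∫ x in a..b, u x * v' x ≤ u b * v b - u a * v a - m * ∫ x in a..b, v x := by
  rw [← Set.uIcc_of_le hab] at hu hv
  have hv_cont : ContinuousOn v (Set.uIcc a b) := HasDerivAt.continuousOn hv
  rw [intervalIntegral.integral_mul_deriv_eq_deriv_mul hu hv hu' hv',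
    ← intervalIntegral.integral_const_mul]
  gcongr
  exact intervalIntegral.integral_mono_on hab (hv_cont.intervalIntegrable.const_mul m)
    (hu'.mul_continuousOn hv_cont)
    fun x hx ↦ mul_le_mul_of_nonneg_right (hm x hx) (hv_nonneg x hx)

theorem le_integral_mul_deriv_of_deriv_le (hab : a ≤ b)
    (hu : ∀ x ∈ Set.Icc a b, HasDerivAt u (u' x) x)
    (hv : ∀ x ∈ Set.Icc a b, HasDerivAt v (v' x) x)
    (hu' : IntervalIntegrable u' volume a b) (hv' : IntervalIntegrable v' volume a b)
    (hv_nonneg : ∀ x ∈ Set.Icc a b, 0 ≤ v x) (hM : ∀ x ∈ Set.Icc a b, u' x ≤ M) :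
    u b * v b - u a * v a - M * ∫ x in a..b, v x ≤ ∫ x in a..b, u x * v' x := by
  have h := integral_mul_deriv_le_of_le_deriv hab (fun x hx ↦ (hu x hx).neg) hv hu'.neg hv'
    hv_nonneg fun x hx ↦ neg_le_neg (hM x hx)
  simp only [Pi.neg_apply, neg_mul, intervalIntegral.integral_neg] at h
  linarith

end IntegrationByParts

section Weights

lemma hasDerivAt_mul_one_sub (θ : ℝ) : HasDerivAt (fun x ↦ x * (1 - x)) (1 - 2 * θ) θ :=
  ((hasDerivAt_id' θ).mul ((hasDerivAt_id' θ).const_sub 1)).congr_deriv (by ring)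

lemma hasDerivAt_mul_add_mul_two_sub (x y θ : ℝ) :
    HasDerivAt (fun s ↦ x * s + y * (s * (2 - s))) (x + y * (2 * (1 - θ))) θ :=
  (((hasDerivAt_id' θ).const_mul x).add
    (((hasDerivAt_id' θ).mul ((hasDerivAt_id' θ).const_sub 2)).const_mul y)).congr_deriv (by ring)

lemma integral_mul_one_sub : ∫ θ in (0 : ℝ)..1, θ * (1 - θ) = 1 / 6 := by
  have h_expand (θ : ℝ) : θ * (1 - θ) = θ - θ ^ 2 := by ring
  simp only [h_expand]
  rw [intervalIntegral.integral_sub (Continuous.intervalIntegrable (by fun_prop) _ _)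
    (Continuous.intervalIntegrable (by fun_prop) _ _), integral_id, integral_pow]
  norm_num

lemma integral_mul_add_mul_two_sub (x y : ℝ) :
    ∫ θ in (0 : ℝ)..1, (x * θ + y * (θ * (2 - θ))) = x / 2 + 2 * y / 3 := by
  have h_expand (θ : ℝ) : x * θ + y * (θ * (2 - θ)) = (x + 2 * y) * θ - y * θ ^ 2 := by ring
  simp only [h_expand]
  rw [intervalIntegral.integral_sub (Continuous.intervalIntegrable (by fun_prop) _ _)
    (Continuous.intervalIntegrable (by fun_prop) _ _),
    intervalIntegral.integral_const_mul, intervalIntegral.integral_const_mul, integral_id,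
    integral_pow]
  ring

end Weights

section Algebra

lemma cube_div_mul_add_le_half {p q : ℝ} (hp : 0 < p) (hq : 0 < q)
    (hρ : 1 ≤ 3 * (q / p) ^ 2 * (1 + q / p)) : p ^ 3 / (6 * (q * (p + q))) ≤ q / 2 := by
  have h_cube : p ^ 3 ≤ 3 * q ^ 2 * (p + q) :=
    calc p ^ 3 = p ^ 3 * 1 := (mul_one _).symm
      _ ≤ p ^ 3 * (3 * (q / p) ^ 2 * (1 + q / p)) := by gcongr
      _ = 3 * q ^ 2 * (p + q) := by field_simp
  rw [div_le_iff₀ (by positivity)]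
  linarith

lemma one_le_three_mul_sq_mul_one_add {η ρ : ℝ} (hη : 0 ≤ η) (hroot : 1 - 3 * η ^ 2 * (1 + η) = 0)
    (h : η ≤ ρ) : 1 ≤ 3 * ρ ^ 2 * (1 + ρ) :=
  calc 1 = 3 * η ^ 2 * (1 + η) := sub_eq_zero.1 hroot
    _ ≤ 3 * ρ ^ 2 * (1 + ρ) := by gcongr

lemma div_mul_rpow_one_sub_div_mul_rpow {α σ τ : ℝ} (hσ : 0 < σ) (hτ : 0 ≤ τ) (hα : α ≠ 1) :
    (1 - α) / σ * (σ ^ (1 - α) / ((1 - α) * τ ^ α)) = (σ * τ) ^ (-α) := by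
  have hα' : 1 - α ≠ 0 := sub_ne_zero.2 hα.symm
  rw [mul_rpow hσ.le hτ, rpow_neg hτ, sub_eq_neg_add, rpow_add_one hσ.ne', neg_add_eq_sub]
  field_simp

end Algebra

section Mesh

variable {α : ℝ} {t : ℕ → ℝ} {j k : ℕ}

lemma tau_pos (ht : StrictMono t) (hj : 1 ≤ j) : 0 < tau t j :=
  sub_pos.2 (ht (by lia))

lemma lt_tstar (hα : α < 2) (ht : StrictMono t) (hjk : j < k) : t j < tstar α t k := by
  have h_le : t j ≤ t (k - 1) := ht.monotone (by lia)
  have h_pos : 0 < (1 - α / 2) * tau t k := mul_pos (by linarith) (tau_pos ht (by lia))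
  unfold tstar
  linarith

lemma add_mul_tau_mem_Icc {θ : ℝ} (hτ : 0 ≤ tau t j) (hθ : θ ∈ Set.Icc (0 : ℝ) 1) :
    t (j - 1) + θ * tau t j ∈ Set.Icc (t (j - 1)) (t j) := by
  have h_le : θ * tau t j ≤ t j - t (j - 1) := mul_le_of_le_one_left hτ hθ.2
  exact ⟨le_add_of_nonneg_right (mul_nonneg hθ.1 hτ), by linarith⟩

end Mesh

section Kernel

/-- The kernel `s ↦ (t_k^* - s)^(-α)` of the Caputo derivative on the `j`-th mesh interval,
in the coordinate `θ ∈ [0, 1]` given by `s = t_{j-1} + θ τ_j`. -/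
noncomputable def caputoKernel (α : ℝ) (t : ℕ → ℝ) (j k : ℕ) (θ : ℝ) : ℝ :=
  (tstar α t k - (t (j - 1) + θ * tau t j)) ^ (-α)

/-- The derivative of `caputoKernel` with respect to `θ`. -/
noncomputable def caputoKernelDeriv (α : ℝ) (t : ℕ → ℝ) (j k : ℕ) (θ : ℝ) : ℝ :=
  α * tau t j * (tstar α t k - (t (j - 1) + θ * tau t j)) ^ (-α - 1)

variable {α θ : ℝ} {t : ℕ → ℝ} {j k : ℕ}

lemma caputoKernel_one : caputoKernel α t j k 1 = (tstar α t k - t j) ^ (-α) := by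
  simp [caputoKernel, tau]

lemma tstar_sub_add_mul_tau_pos (hτ : 0 ≤ tau t j) (hjk : t j < tstar α t k)
    (hθ : θ ∈ Set.Icc (0 : ℝ) 1) : 0 < tstar α t k - (t (j - 1) + θ * tau t j) :=
  sub_pos.2 ((add_mul_tau_mem_Icc hτ hθ).2.trans_lt hjk)

lemma hasDerivAt_caputoKernel (hτ : 0 ≤ tau t j) (hjk : t j < tstar α t k)
    (hθ : θ ∈ Set.Icc (0 : ℝ) 1) :
    HasDerivAt (caputoKernel α t j k) (caputoKernelDeriv α t j k θ) θ := by
  have h_base : HasDerivAt (fun x ↦ tstar α t k - (t (j - 1) + x * tau t j)) (-tau t j) θ := by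
    simpa using (((hasDerivAt_id θ).mul_const (tau t j)).const_add (t (j - 1))).const_sub
      (tstar α t k)
  refine (h_base.rpow_const (p := -α)
    (Or.inl (tstar_sub_add_mul_tau_pos hτ hjk hθ).ne')).congr_deriv ?_
  unfold caputoKernelDeriv
  ring

lemma intervalIntegrable_caputoKernelDeriv (hτ : 0 ≤ tau t j) (hjk : t j < tstar α t k) :
    IntervalIntegrable (caputoKernelDeriv α t j k) volume 0 1 := by
  apply ContinuousOn.intervalIntegrable_of_Icc zero_le_one
  refine continuousOn_const.mul (ContinuousOn.rpow_const (by fun_prop) ?_)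
  exact fun θ hθ ↦ Or.inl (tstar_sub_add_mul_tau_pos hτ hjk hθ).ne'

lemma le_caputoKernelDeriv (hα : 0 ≤ α) (hτ : 0 ≤ tau t j) (hjk : t j < tstar α t k)
    (hθ : θ ∈ Set.Icc (0 : ℝ) 1) :
    α * tau t j * (tstar α t k - t (j - 1)) ^ (-α - 1) ≤ caputoKernelDeriv α t j k θ :=
  mul_le_mul_of_nonneg_left
    (rpow_le_rpow_of_nonpos (tstar_sub_add_mul_tau_pos hτ hjk hθ)
      (sub_le_sub_left (add_mul_tau_mem_Icc hτ hθ).1 _) (by linarith))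
    (mul_nonneg hα hτ)

lemma caputoKernelDeriv_le (hα : 0 ≤ α) (hτ : 0 ≤ tau t j) (hjk : t j < tstar α t k)
    (hθ : θ ∈ Set.Icc (0 : ℝ) 1) :
    caputoKernelDeriv α t j k θ ≤ α * tau t j * (tstar α t k - t j) ^ (-α - 1) :=
  mul_le_mul_of_nonneg_left
    (rpow_le_rpow_of_nonpos (sub_pos.2 hjk) (sub_le_sub_left (add_mul_tau_mem_Icc hτ hθ).2 _)
      (by linarith))
    (mul_nonneg hα hτ)

lemma caputoKernelDeriv_nonneg (hα : 0 ≤ α) (hτ : 0 ≤ tau t j) (hjk : t j < tstar α t k)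
    (hθ : θ ∈ Set.Icc (0 : ℝ) 1) : 0 ≤ caputoKernelDeriv α t j k θ :=
  mul_nonneg (mul_nonneg hα hτ) (rpow_nonneg (tstar_sub_add_mul_tau_pos hτ hjk hθ).le _)

lemma div_mul_rpow_eq_mul_caputoKernel (hτ : 0 ≤ tau t j) (hjk : t j < tstar α t k)
    (hθ : θ ∈ Set.Icc (0 : ℝ) 1) (x y : ℝ) :
    x / (y * (tstar α t k - (t (j - 1) + θ * tau t j)) ^ α) =
      y⁻¹ * (caputoKernel α t j k θ * x) := by
  rw [caputoKernel, rpow_neg (tstar_sub_add_mul_tau_pos hτ hjk hθ).le, div_eq_mul_inv, mul_inv]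
  ring

end Kernel

section Coefficients

variable {α : ℝ} {t : ℕ → ℝ} {j k : ℕ}

lemma ccoef_eq (hτ : 0 ≤ tau t j) (hjk : t j < tstar α t k) :
    ccoef α t j k = -(tau t j ^ 2 / (tau t (j + 1) * (tau t j + tau t (j + 1)))) *
      ∫ θ in (0 : ℝ)..1, caputoKernel α t j k θ * (1 - 2 * θ) := by
  rw [ccoef, ← intervalIntegral.integral_const_mul]
  refine intervalIntegral.integral_congr fun θ hθ ↦ ?_
  rw [Set.uIcc_of_le zero_le_one] at hθ
  simp only [div_mul_rpow_eq_mul_caputoKernel hτ hjk hθ]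
  ring

lemma acoef_eq (hτ : 0 ≤ tau t j) (hjk : t j < tstar α t k) :
    acoef α t j k = -(tau t j + tau t (j + 1))⁻¹ * ∫ θ in (0 : ℝ)..1,
      caputoKernel α t j k θ * (tau t (j + 1) + tau t j * (2 * (1 - θ))) := by
  rw [acoef, ← intervalIntegral.integral_const_mul]
  refine intervalIntegral.integral_congr fun θ hθ ↦ ?_
  rw [Set.uIcc_of_le zero_le_one] at hθ
  simp only [div_mul_rpow_eq_mul_caputoKernel hτ hjk hθ]
  ring

theorem ccoef_nonneg (hα : 0 ≤ α) (hτ : 0 ≤ tau t j) (hτ' : 0 ≤ tau t (j + 1))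
    (hjk : t j < tstar α t k) : 0 ≤ ccoef α t j k := by
  have h_int := integral_mul_deriv_le_of_le_deriv zero_le_one
    (fun _ hθ ↦ hasDerivAt_caputoKernel hτ hjk hθ) (fun θ _ ↦ hasDerivAt_mul_one_sub θ)
    (intervalIntegrable_caputoKernelDeriv hτ hjk)
    (Continuous.intervalIntegrable (by fun_prop) _ _)
    (fun _ hθ ↦ mul_nonneg hθ.1 (sub_nonneg.2 hθ.2))
    (fun _ hθ ↦ caputoKernelDeriv_nonneg hα hτ hjk hθ)
  rw [ccoef_eq hτ hjk]
  exact mul_nonneg_of_nonpos_of_nonpos (neg_nonpos.2 (by positivity)) (by simpa using h_int)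

theorem ccoef_le (hα : 0 ≤ α) (hτ : 0 ≤ tau t j) (hτ' : 0 ≤ tau t (j + 1))
    (hjk : t j < tstar α t k) :
    ccoef α t j k ≤ α * (tstar α t k - t j) ^ (-α - 1) *
      (tau t j ^ 3 / (6 * (tau t (j + 1) * (tau t j + tau t (j + 1))))) := by
  have h_int := le_integral_mul_deriv_of_deriv_le zero_le_one
    (fun _ hθ ↦ hasDerivAt_caputoKernel hτ hjk hθ) (fun θ _ ↦ hasDerivAt_mul_one_sub θ)
    (intervalIntegrable_caputoKernelDeriv hτ hjk)
    (Continuous.intervalIntegrable (by fun_prop) _ _)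
    (fun _ hθ ↦ mul_nonneg hθ.1 (sub_nonneg.2 hθ.2))
    (fun _ hθ ↦ caputoKernelDeriv_le hα hτ hjk hθ)
  rw [integral_mul_one_sub] at h_int
  rw [ccoef_eq hτ hjk]
  refine (mul_le_mul_of_nonpos_left h_int (neg_nonpos.2 (by positivity))).trans_eq ?_
  rw [div_mul_eq_div_div _ (6 : ℝ)]
  ring

theorem le_acoef (hα : 0 ≤ α) (hτ : 0 < tau t j) (hτ' : 0 ≤ tau t (j + 1))
    (hjk : t j < tstar α t k) :
    -(tstar α t k - t j) ^ (-α) + α * (tstar α t k - t (j - 1)) ^ (-α - 1) * (tau t j / 2) ≤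
      acoef α t j k := by
  have h_int := integral_mul_deriv_le_of_le_deriv zero_le_one
    (fun _ hθ ↦ hasDerivAt_caputoKernel hτ.le hjk hθ)
    (fun θ _ ↦ hasDerivAt_mul_add_mul_two_sub (tau t (j + 1)) (tau t j) θ)
    (intervalIntegrable_caputoKernelDeriv hτ.le hjk)
    (Continuous.intervalIntegrable (by fun_prop) _ _)
    (fun θ hθ ↦ add_nonneg (mul_nonneg hτ' hθ.1)
      (mul_nonneg hτ.le (mul_nonneg hθ.1 (by linarith [hθ.2]))))
    (fun _ hθ ↦ le_caputoKernelDeriv hα hτ.le hjk hθ)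
  rw [integral_mul_add_mul_two_sub, caputoKernel_one] at h_int
  rw [acoef_eq hτ.le hjk, neg_mul, inv_mul_eq_div, le_neg, div_le_iff₀ (by linarith)]
  have h_rpow : 0 ≤ (tstar α t k - t (j - 1)) ^ (-α - 1) :=
    rpow_nonneg (sub_pos.2 ((sub_pos.1 hτ).trans hjk)).le _
  have h_sq : 0 ≤ α * (tstar α t k - t (j - 1)) ^ (-α - 1) * tau t j ^ 2 := by positivity
  linarith

theorem dcoef_le (hα : 0 ≤ α) (hτ₀ : 0 < tau t (j - 1)) (hτ₁ : 0 < tau t j)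
    (hτ₂ : 0 ≤ tau t (j + 1)) (hjk : t j < tstar α t k)
    (hρ : 1 ≤ 3 * rho t j ^ 2 * (1 + rho t j)) :
    dcoef α t j k ≤ (tstar α t k - t j) ^ (-α) := by
  obtain ⟨i, rfl⟩ : ∃ i, j = i + 1 := ⟨j - 1, by cases j <;> simp_all [tau]⟩
  rw [Nat.add_sub_cancel] at hτ₀
  have h_lt : t i < tstar α t k := (sub_pos.1 hτ₁).trans hjk
  have h_rpow : 0 ≤ (tstar α t k - t i) ^ (-α - 1) := rpow_nonneg (sub_pos.2 h_lt).le _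
  calc dcoef α t (i + 1) k = ccoef α t i k - acoef α t (i + 1) k := rfl
    _ ≤ α * (tstar α t k - t i) ^ (-α - 1) *
            (tau t i ^ 3 / (6 * (tau t (i + 1) * (tau t i + tau t (i + 1))))) -
          (-(tstar α t k - t (i + 1)) ^ (-α) +
            α * (tstar α t k - t i) ^ (-α - 1) * (tau t (i + 1) / 2)) :=
      sub_le_sub (ccoef_le hα hτ₀.le hτ₁.le h_lt) (le_acoef hα hτ₁ hτ₂ hjk)
    _ ≤ α * (tstar α t k - t i) ^ (-α - 1) * (tau t (i + 1) / 2) -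
          (-(tstar α t k - t (i + 1)) ^ (-α) +
            α * (tstar α t k - t i) ^ (-α - 1) * (tau t (i + 1) / 2)) :=
      sub_le_sub_right
        (mul_le_mul_of_nonneg_left (cube_div_mul_add_le_half hτ₀ hτ₁ hρ) (mul_nonneg hα h_rpow)) _
    _ = (tstar α t k - t (i + 1)) ^ (-α) := by ring

theorem neg_acoef_le (hα : 0 ≤ α) (hτ : 0 < tau t j) (hτ' : 0 ≤ tau t (j + 1))
    (hjk : t j < tstar α t k) : -acoef α t j k ≤ (tstar α t k - t j) ^ (-α) := by
  have h_rpow : 0 ≤ (tstar α t k - t (j - 1)) ^ (-α - 1) :=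
    rpow_nonneg (sub_pos.2 ((sub_pos.1 hτ).trans hjk)).le _
  have h_nonneg : 0 ≤ α * (tstar α t k - t (j - 1)) ^ (-α - 1) * (tau t j / 2) := by positivity
  linarith [le_acoef hα hτ hτ' hjk]

end Coefficients

section Matrix

variable {α : ℝ} {t : ℕ → ℝ} {j k : ℕ}

theorem Mentry_le_of_lt (hα : α ∈ Set.Ico (0 : ℝ) 2) (ht : StrictMono t) (hj : 1 ≤ j)
    (hjk : j < k) (hρ : 2 ≤ j → 1 ≤ 3 * rho t j ^ 2 * (1 + rho t j)) :
    Mentry α t k j ≤ (tstar α t k - t j) ^ (-α) := by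
  have h_tau {i : ℕ} (hi : 1 ≤ i) : 0 < tau t i := tau_pos ht hi
  have h_lt : t j < tstar α t k := lt_tstar hα.2 ht hjk
  rcases hj.eq_or_lt with rfl | hj_two
  · have h_entry : Mentry α t k 1 = -acoef α t 1 k := by
      simp [Mentry, hjk.ne, hjk.not_gt]
    exact h_entry.trans_le (neg_acoef_le hα.1 (h_tau le_rfl) (h_tau (by lia)).le h_lt)
  · have h_entry : Mentry α t k j = dcoef α t j k := by
      simp [Mentry, hjk.ne, hjk.not_gt, hj_two.ne', (zero_lt_one.trans hj_two).ne']
    exact h_entry.trans_le (dcoef_le hα.1 (h_tau (by lia)) (h_tau hj) (h_tau (by lia)).le h_lt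
      (hρ hj_two))

theorem le_Mentry_self (hα : α ∈ Set.Ico (0 : ℝ) 1) (ht : StrictMono t) (hk : 2 ≤ k) :
    (tstar α t k - t (k - 1)) ^ (-α) ≤ (1 - α) / (1 - α / 2) * Mentry α t k k := by
  obtain ⟨hα₀, hα₁⟩ := hα
  have hσ : 0 < 1 - α / 2 := by linarith
  have h_entry : Mentry α t k k =
      ccoef α t (k - 1) k + (1 - α / 2) ^ (1 - α) / ((1 - α) * tau t k ^ α) := by
    simp [Mentry, show k ≠ 0 by lia]
  have h_ccoef : 0 ≤ ccoef α t (k - 1) k :=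
    ccoef_nonneg hα₀ (tau_pos ht (by lia)).le (tau_pos ht (by lia)).le
      (lt_tstar (by linarith) ht (by lia))
  have h_tstar : tstar α t k - t (k - 1) = (1 - α / 2) * tau t k := add_sub_cancel_left _ _
  rw [h_entry, mul_add, h_tstar,
    div_mul_rpow_one_sub_div_mul_rpow hσ (tau_pos ht (by lia)).le hα₁.ne]
  exact le_add_of_nonneg_left (mul_nonneg (div_nonneg (by linarith) hσ.le) h_ccoef)

theorem Mentry_diag_dominance_general (hα : α ∈ Set.Ico (0 : ℝ) 1) (ht : StrictMono t)
    (hj : 1 ≤ j) (hjk : j < k) (hρ : 2 ≤ j → 1 ≤ 3 * rho t j ^ 2 * (1 + rho t j)) :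
    Mentry α t k j ≤ (1 - α) / (1 - α / 2) * Mentry α t k k := by
  have h_lt : t (k - 1) < tstar α t k := lt_tstar (by linarith [hα.2]) ht (by lia)
  calc Mentry α t k j ≤ (tstar α t k - t j) ^ (-α) :=
        Mentry_le_of_lt ⟨hα.1, hα.2.trans one_lt_two⟩ ht hj hjk hρ
    _ ≤ (tstar α t k - t (k - 1)) ^ (-α) :=
        rpow_le_rpow_of_nonpos (sub_pos.2 h_lt)
          (sub_le_sub_left (ht.monotone (by lia)) _) (neg_nonpos.2 hα.1)
    _ ≤ (1 - α) / (1 - α / 2) * Mentry α t k k := le_Mentry_self hα ht (by lia)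

end Matrix

/-- (Q3): if `ρ_k ≥ η` for all `k ≥ 2`, then `((1-α)/σ) M_{k,k} - M_{k,k-1} ≥ 0`. -/
theorem Mentry_diag_dominance (α : ℝ) (hα : α ∈ Set.Ioo (0:ℝ) 1)
    (t : ℕ → ℝ) (ht0 : t 0 = 0) (hmono : StrictMono t)
    (η : ℝ) (hηpos : 0 < η) (hηroot : 1 - 3 * η ^ 2 * (1 + η) = 0)
    (hmesh : ∀ k : ℕ, 2 ≤ k → η ≤ rho t k)
    (k : ℕ) (hk : 2 ≤ k) :
    (1 - α) / (1 - α / 2) * Mentry α t k k - Mentry α t k (k - 1) ≥ 0 :=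
  sub_nonneg.2 <| Mentry_diag_dominance_general ⟨hα.1.le, hα.2⟩ hmono (by lia) (by lia) fun hk₁ ↦
    one_le_three_mul_sq_mul_one_add hηpos.le hηroot (hmesh (k - 1) hk₁)
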